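/- Let A ∈ ℝ^{m×n}, y ∈ ℝ^m, let x* ∈ ℝⁿ be k-sparse and set η = y − Ax*. Let q ≥ 2k be a positive integer, set t = ⌈q/k⌉, and let δ₁ ≤ δ₂ ≤ δ₃ be restricted isometry constants of orders k, 2k, 3k for A. Suppose δ₃ < β*, where β* is the unique root in (0,1) of the equation 9(t+1)²β³ + 9(t+1)²β² + (2/(7+3√5))β − 2/(7+3√5) = 0. Let (x^p) be a PGROT sequence for (A, y, k, q). Then ρ̄ := 3((√5+1)/2)²(t+1)δ₃√((1+δ₁)/(1−δ₂)) < 1 and for every p ≥ 0: ‖x^{p+1} − x*‖₂ ≤ ρ̄^p‖x^0 − x*‖₂ + (τ̄/(1−ρ̄))‖η‖₂, where τ̄ = ((√5+1)/2)²·3(t+1)(1+δ₁)/√(1−δ₂) + (√5+1)/√(1−δ₂). -/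

import Mathlib

/-!
The iteration contracts the error `‖x^p - x*‖` up to noise. Write `S = supp x*`,
`r = Aᵀ (y - A x^p)`, `e = ‖x^p - x*‖` and `v = w̄ ⊗ u`.

* On any index set `B` with `|B| ≤ k`, `‖(u - x*)_B‖ ≤ 2 (δ₃ e + √(1+δ₁) ‖η‖)`
  (`nrm_restr_u_sub_le`). Up to the entries of `r` missed by the thresholding, `u - x*` is
  `x^p - x* + r = (I - AᵀA)(x^p - x*) + Aᵀη`, which the restricted isometry property controls on
  `B`. As `q ≥ 2k`, the missed entries are dominated by entries of `r` on which `x^p - x*`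
  vanishes, and those obey the same bound.
* With `X = supp x^{p+1}` and `V = X ∪ S`, the residual `‖y - A v‖` is at least
  `√(1-δ₂) ‖(v - x*)_V‖ - ‖A v_{Vᶜ}‖ - ‖η‖`, where `v_{Vᶜ}` splits into at most `t + 1` blocks of
  size `k`. By optimality of `w̄`, it is at most `‖y - A u_{S'}‖` for any `S' ⊇ S` with `|S'| = k`.
  Together these bound `‖(v - x*)_V‖`.
* Hard thresholding loses at most a factor `2`: `‖x^{p+1} - x*‖ ≤ 2 ‖(v - x*)_V‖`
  (`nrm_hardThreshold_sub_le`).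

The resulting one-step constant is `4 (t + 2)` in place of `3 φ² (t + 1)`, `φ` the golden ratio.
Since `t ≥ 2`, the former is smaller, with enough room to absorb the difference between the
remaining noise constants `4` and `2φ`. So the elementary factor `2` may replace the sharp
thresholding factor `φ`. Finally `ρ̄ < 1` because the cubic is increasing and `φ⁴ = (7 + 3√5)/2`.
-/

open Matrix Finset Filter

/-- Euclidean (ℓ₂) norm of a vector. -/
noncomputable def nrm {n : ℕ} (x : Fin n → ℝ) : ℝ := Real.sqrt (∑ i, x i ^ 2)

/-- A vector is `s`-sparse if it has at most `s` nonzero entries. -/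
def sparse {n : ℕ} (s : ℕ) (x : Fin n → ℝ) : Prop :=
  ((Finset.univ : Finset (Fin n)).filter fun i => x i ≠ 0).card ≤ s

/-- Support of a vector, as a finset. -/
noncomputable def suppF {n : ℕ} (x : Fin n → ℝ) : Finset (Fin n) :=
  (Finset.univ : Finset (Fin n)).filter fun i => x i ≠ 0

/-- Restriction of a vector to an index set (zero outside). -/
def restr {n : ℕ} (x : Fin n → ℝ) (Ω : Finset (Fin n)) : Fin n → ℝ :=
  fun i => if i ∈ Ω then x i else 0

/-- `δ ∈ [0,1)` is a restricted isometry constant of order `s` for `A`. -/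
def RIC {m n : ℕ} (A : Matrix (Fin m) (Fin n) ℝ) (s : ℕ) (δ : ℝ) : Prop :=
  0 ≤ δ ∧ δ < 1 ∧ ∀ x : Fin n → ℝ, sparse s x →
    (1 - δ) * nrm x ^ 2 ≤ nrm (A.mulVec x) ^ 2 ∧
      nrm (A.mulVec x) ^ 2 ≤ (1 + δ) * nrm x ^ 2

/-- `h` is a hard thresholding of `z` at level `q` with support `Ω`. -/
def IsHT {n : ℕ} (q : ℕ) (z h : Fin n → ℝ) (Ω : Finset (Fin n)) : Prop :=
  Ω.card = q ∧ (∀ i ∈ Ω, h i = z i) ∧ (∀ i ∉ Ω, h i = 0) ∧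
    ∀ i ∈ Ω, ∀ j ∉ Ω, |z j| ≤ |z i|

/-- A PGROT iterate sequence for `(A, y, k, q)`. -/
def IsPGROTSeq {m n : ℕ} (A : Matrix (Fin m) (Fin n) ℝ) (y : Fin m → ℝ) (k q : ℕ)
    (x : ℕ → Fin n → ℝ) : Prop :=
  x 0 = 0 ∧ ∀ p : ℕ, ∃ (h : Fin n → ℝ) (Ω : Finset (Fin n)) (w : Fin n → ℝ)
      (Ω' : Finset (Fin n)),
    IsHT q (Aᵀ.mulVec (y - A.mulVec (x p))) h Ω ∧
    (∑ i, w i) = (k : ℝ) ∧ (∀ i, 0 ≤ w i ∧ w i ≤ 1) ∧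
    (∀ w' : Fin n → ℝ, (∑ i, w' i) = (k : ℝ) → (∀ i, 0 ≤ w' i ∧ w' i ≤ 1) →
      nrm (y - A.mulVec (fun i => w i * (x p i + h i))) ^ 2 ≤
        nrm (y - A.mulVec (fun i => w' i * (x p i + h i))) ^ 2) ∧
    IsHT k (fun i => w i * (x p i + h i)) (x (p + 1)) Ω'

/-! ### The Euclidean norm -/

lemma nrm_eq_norm {n : ℕ} (x : Fin n → ℝ) : nrm x = ‖WithLp.toLp 2 x‖ := by
  simp [nrm, EuclideanSpace.norm_eq]

lemma nrm_nonneg {n : ℕ} (x : Fin n → ℝ) : 0 ≤ nrm x := Real.sqrt_nonneg _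

lemma nrm_add_le {n : ℕ} (x y : Fin n → ℝ) : nrm (x + y) ≤ nrm x + nrm y := by
  simp only [nrm_eq_norm, WithLp.toLp_add]
  exact norm_add_le _ _

lemma nrm_neg {n : ℕ} (x : Fin n → ℝ) : nrm (-x) = nrm x := by
  simp [nrm]

lemma nrm_sub_le {n : ℕ} (x y : Fin n → ℝ) : nrm (x - y) ≤ nrm x + nrm y := by
  rw [sub_eq_add_neg, ← nrm_neg y]
  exact nrm_add_le _ _

lemma nrm_sq {n : ℕ} (x : Fin n → ℝ) : nrm x ^ 2 = x ⬝ᵥ x := by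
  rw [nrm, Real.sq_sqrt (Finset.sum_nonneg fun i _ => sq_nonneg _)]
  simp [dotProduct, sq]

lemma nrm_sq_sum {n : ℕ} (x : Fin n → ℝ) : nrm x ^ 2 = ∑ i, x i ^ 2 :=
  Real.sq_sqrt (Finset.sum_nonneg fun i _ => sq_nonneg _)

lemma dotProduct_le_nrm {n : ℕ} (x y : Fin n → ℝ) : x ⬝ᵥ y ≤ nrm x * nrm y := by
  refine le_of_sq_le_sq ?_ (mul_nonneg (nrm_nonneg _) (nrm_nonneg _))
  rw [mul_pow, nrm_sq_sum, nrm_sq_sum]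
  exact Finset.sum_mul_sq_le_sq_mul_sq _ _ _

lemma nrm_le_of_abs_le {n : ℕ} (x y : Fin n → ℝ) (h : ∀ i, |x i| ≤ |y i|) : nrm x ≤ nrm y :=
  Real.sqrt_le_sqrt (Finset.sum_le_sum fun i _ => sq_le_sq.mpr (h i))

lemma nrm_restr_sq {n : ℕ} (x : Fin n → ℝ) (P : Finset (Fin n)) :
    nrm (restr x P) ^ 2 = ∑ i ∈ P, x i ^ 2 := by
  rw [nrm_sq_sum]
  simp [restr, ite_pow, Finset.sum_ite_mem]

lemma restr_dotProduct {n : ℕ} (x : Fin n → ℝ) (P : Finset (Fin n)) :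
    restr x P ⬝ᵥ x = nrm (restr x P) ^ 2 := by
  rw [nrm_restr_sq]
  simp [dotProduct, restr, sq]

/-- Comparison behind hard thresholding: at least as many entries, all at least as large, have at
least as large a norm. -/
lemma nrm_restr_le_of_dominated {n : ℕ} (z : Fin n → ℝ) (P Q : Finset (Fin n))
    (hc : P.card ≤ Q.card) (h : ∀ i ∈ Q, ∀ j ∈ P, |z j| ≤ |z i|) :
    nrm (restr z P) ≤ nrm (restr z Q) := by
  refine le_of_sq_le_sq ?_ (nrm_nonneg _)
  rw [nrm_restr_sq, nrm_restr_sq]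
  rcases P.eq_empty_or_nonempty with rfl | hP
  · simpa using Finset.sum_nonneg fun i (_ : i ∈ Q) => sq_nonneg (z i)
  obtain ⟨j, hj, hmax⟩ := P.exists_max_image (fun i => z i ^ 2) hP
  calc ∑ i ∈ P, z i ^ 2 ≤ P.card • z j ^ 2 := Finset.sum_le_card_nsmul _ _ _ hmax
    _ ≤ Q.card • z j ^ 2 := nsmul_le_nsmul_left (sq_nonneg _) hc
    _ ≤ ∑ i ∈ Q, z i ^ 2 :=
      Finset.card_nsmul_le_sum _ _ _ fun i hi => sq_le_sq.mpr (h i hi j hj)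

/-! ### Restricted isometry estimates -/

lemma sparse_of_support {n s : ℕ} {x : Fin n → ℝ} (F : Finset (Fin n)) (hF : F.card ≤ s)
    (h : ∀ i ∉ F, x i = 0) : sparse s x := by
  refine le_trans (Finset.card_le_card fun i hi => ?_) hF
  by_contra hn
  simp [h i hn] at hi

lemma nrm_mulVec_le {m n s : ℕ} {A : Matrix (Fin m) (Fin n) ℝ} {δ : ℝ} (h : RIC A s δ)
    {x : Fin n → ℝ} (hx : sparse s x) : nrm (A.mulVec x) ≤ √(1 + δ) * nrm x := by
  refine le_of_sq_le_sq ?_ (mul_nonneg (Real.sqrt_nonneg _) (nrm_nonneg _))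
  rw [mul_pow, Real.sq_sqrt (by linarith [h.1])]
  exact (h.2.2 x hx).2

lemma le_nrm_mulVec {m n s : ℕ} {A : Matrix (Fin m) (Fin n) ℝ} {δ : ℝ} (h : RIC A s δ)
    {x : Fin n → ℝ} (hx : sparse s x) : √(1 - δ) * nrm x ≤ nrm (A.mulVec x) := by
  refine le_of_sq_le_sq ?_ (nrm_nonneg _)
  rw [mul_pow, Real.sq_sqrt (by linarith [h.2.1])]
  exact (h.2.2 x hx).1

lemma nrm_restr_transpose_le {m n s : ℕ} {A : Matrix (Fin m) (Fin n) ℝ} {δ : ℝ} (h : RIC A s δ)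
    (η : Fin m → ℝ) (T : Finset (Fin n)) (hT : T.card ≤ s) :
    nrm (restr (Aᵀ.mulVec η) T) ≤ √(1 + δ) * nrm η := by
  set a := restr (Aᵀ.mulVec η) T with ha
  have hs : sparse s a := sparse_of_support T hT fun i hi => by simp [ha, restr, hi]
  have e1 : nrm a ^ 2 = A.mulVec a ⬝ᵥ η := by
    rw [← restr_dotProduct, ← ha, Matrix.mulVec_transpose, dotProduct_comm,
      ← Matrix.dotProduct_mulVec, dotProduct_comm]
  have e2 : nrm a * nrm a ≤ (√(1 + δ) * nrm η) * nrm a := by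
    have := dotProduct_le_nrm (A.mulVec a) η
    have := mul_le_mul_of_nonneg_right (nrm_mulVec_le h hs) (nrm_nonneg η)
    nlinarith
  rcases (nrm_nonneg a).eq_or_lt with h0 | h0
  · rw [← h0]
    exact mul_nonneg (Real.sqrt_nonneg _) (nrm_nonneg _)
  · exact le_of_mul_le_mul_right e2 h0

/-- `I - AᵀA` shrinks by the factor `δ`, as seen from a set `T`, any vector supported in `W` with
`|T ∪ W| ≤ s`. -/
lemma nrm_restr_sub_gram_le {m n s : ℕ} {A : Matrix (Fin m) (Fin n) ℝ} {δ : ℝ} (h : RIC A s δ)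
    (z : Fin n → ℝ) (T W : Finset (Fin n)) (hTW : (T ∪ W).card ≤ s) (hz : ∀ i ∉ W, z i = 0) :
    nrm (restr (z - Aᵀ.mulVec (A.mulVec z)) T) ≤ δ * nrm z := by
  set a := restr (z - Aᵀ.mulVec (A.mulVec z)) T with ha
  have ha0 : ∀ i ∉ T, a i = 0 := fun i hi => by simp [ha, restr, hi]
  have e1 : nrm a ^ 2 = a ⬝ᵥ z - A.mulVec a ⬝ᵥ A.mulVec z := by
    rw [← restr_dotProduct, ← ha, dotProduct_sub, Matrix.mulVec_transpose,
      dotProduct_comm a (_ ᵥ* A), ← Matrix.dotProduct_mulVec, dotProduct_comm (A.mulVec z)]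
  -- Polarization: apply the isometry bounds to `a + c z` and `a - c z`.
  have key : ∀ c : ℝ, 4 * c * nrm a ^ 2 ≤ δ * (2 * nrm a ^ 2 + 2 * c ^ 2 * nrm z ^ 2) := by
    intro c
    have hs : ∀ c : ℝ, sparse s (a + c • z) := fun c =>
      sparse_of_support (T ∪ W) hTW fun i hi => by
        simp only [Finset.mem_union, not_or] at hi
        simp [ha0 i hi.1, hz i hi.2]
    have p1 := (h.2.2 _ (hs c)).1
    have p2 := (h.2.2 _ (hs (-c))).2
    simp only [nrm_sq, Matrix.mulVec_add, Matrix.mulVec_smul, dotProduct_add, add_dotProduct,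
      dotProduct_smul, smul_dotProduct, smul_eq_mul] at p1 p2 e1 ⊢
    rw [dotProduct_comm z a, dotProduct_comm (A.mulVec z) (A.mulVec a)] at p1 p2
    have e3 : 4 * c * (a ⬝ᵥ a) = 4 * c * (a ⬝ᵥ z - A.mulVec a ⬝ᵥ A.mulVec z) := by rw [e1]
    linarith
  rcases h.1.eq_or_lt with h0 | h0
  · have h1 := key 1
    rw [← h0] at h1 ⊢
    have : nrm a ^ 2 ≤ 0 := by linarith
    rw [zero_mul]
    exact (pow_eq_zero_iff two_ne_zero).mp (le_antisymm this (sq_nonneg _)) |>.le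
  · refine le_of_sq_le_sq ?_ (mul_nonneg h.1 (nrm_nonneg _))
    have h1 := key δ
    have : δ * (nrm a ^ 2) ≤ δ * (δ * nrm z) ^ 2 := by nlinarith
    exact le_of_mul_le_mul_left this h0

/-- Splitting a support of size at most `N k` into blocks of size at most `k`. -/
lemma nrm_mulVec_restr_le_blocks {m n k : ℕ} (A : Matrix (Fin m) (Fin n) ℝ) (v : Fin n → ℝ)
    (c : ℝ) (N : ℕ) (F : Finset (Fin n)) (hF : F.card ≤ N * k)
    (hB : ∀ T ⊆ F, T.card ≤ k → nrm (A.mulVec (restr v T)) ≤ c) :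
    nrm (A.mulVec (restr v F)) ≤ N * c := by
  induction N generalizing F with
  | zero =>
    have : F = ∅ := by simpa using hF
    subst this
    have : restr v ∅ = 0 := by ext i; simp [restr]
    simp [this, nrm]
  | succ N ih =>
    obtain ⟨T, hTF, hT⟩ := F.exists_subset_card_eq (Nat.min_le_right k F.card)
    have hsplit : restr v F = restr v T + restr v (F \ T) := by
      ext i
      by_cases h1 : i ∈ T
      · simp [restr, h1, hTF h1]
      · by_cases h2 : i ∈ F <;> simp [restr, h1, h2]
    rw [hsplit, Matrix.mulVec_add]
    have h1 := hB T hTF (by omega)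
    have hcard : (F \ T).card ≤ N * k := by
      rw [Finset.card_sdiff_of_subset hTF, hT]
      rw [Nat.succ_mul] at hF
      omega
    have h2 := ih (F \ T) hcard fun T' hT' => hB T' (hT'.trans Finset.sdiff_subset)
    have := nrm_add_le (A.mulVec (restr v T)) (A.mulVec (restr v (F \ T)))
    push_cast
    linarith

/-! ### One iteration -/

/-- Quasi-optimality of hard thresholding, measured on the union of the two supports only. -/
lemma nrm_hardThreshold_sub_le {n k : ℕ} {z x' xs : Fin n → ℝ} {X S : Finset (Fin n)}
    (h : IsHT k z x' X) (hS : S.card ≤ k) (hxs : ∀ i ∉ S, xs i = 0) :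
    nrm (x' - xs) ≤ 2 * nrm (restr (z - xs) (X ∪ S)) := by
  obtain ⟨hX, h1, h2, h3⟩ := h
  have hsplit : x' - xs = restr (z - xs) (X ∪ S) - restr z (S \ X) := by
    ext i
    by_cases hiX : i ∈ X
    · simp [restr, hiX, h1 i hiX]
    · by_cases hiS : i ∈ S
      · simp [restr, hiX, hiS, h2 i hiX]
      · simp [restr, hiX, hiS, h2 i hiX, hxs i hiS]
  have hc : (S \ X).card ≤ (X \ S).card := by
    have e1 := Finset.card_sdiff_add_card_inter S X
    have e2 := Finset.card_sdiff_add_card_inter X S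
    rw [Finset.inter_comm] at e2
    omega
  have hdom : nrm (restr z (S \ X)) ≤ nrm (restr z (X \ S)) :=
    nrm_restr_le_of_dominated z _ _ hc fun i hi j hj =>
      h3 i (Finset.mem_sdiff.mp hi).1 j (Finset.mem_sdiff.mp hj).2
  have hle : nrm (restr z (X \ S)) ≤ nrm (restr (z - xs) (X ∪ S)) := by
    refine nrm_le_of_abs_le _ _ fun i => ?_
    by_cases hi : i ∈ X \ S
    · have hi' := Finset.mem_sdiff.mp hi
      simp [restr, hi'.1, hi'.2, hxs i hi'.2]
    · simp only [restr, if_neg hi, abs_zero]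
      exact abs_nonneg _
  rw [hsplit]
  have := nrm_sub_le (restr (z - xs) (X ∪ S)) (restr z (S \ X))
  linarith

/-- The error of the partial gradient step `u = x^p + h` on any set of at most `k` indices. -/
lemma nrm_restr_u_sub_le {m n k q : ℕ} (hq : 2 * k ≤ q) {A : Matrix (Fin m) (Fin n) ℝ}
    {y : Fin m → ℝ} {xs xp h : Fin n → ℝ} {S P Ω : Finset (Fin n)} {δ₁ δ₃ : ℝ}
    (h1 : RIC A k δ₁) (h3 : RIC A (3 * k) δ₃)
    (hS : S.card ≤ k) (hxs : ∀ i ∉ S, xs i = 0) (hP : P.card ≤ k) (hxp : ∀ i ∉ P, xp i = 0)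
    (hh : IsHT q (Aᵀ.mulVec (y - A.mulVec xp)) h Ω) (B : Finset (Fin n)) (hB : B.card ≤ k) :
    nrm (restr (xp + h - xs) B) ≤
      2 * (δ₃ * nrm (xp - xs) + √(1 + δ₁) * nrm (y - A.mulVec xs)) := by
  obtain ⟨hΩ, hh1, hh2, hh3⟩ := hh
  set r := Aᵀ.mulVec (y - A.mulVec xp) with hr
  set W := P ∪ S with hW
  have hWc : W.card ≤ 2 * k := (Finset.card_union_le _ _).trans (by omega)
  have hz : ∀ i ∉ W, (xp - xs) i = 0 := fun i hi => by
    simp only [hW, Finset.mem_union, not_or] at hi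
    simp [hxp i hi.1, hxs i hi.2]
  set g := xp - xs + r with hg
  have hgeq : g = (xp - xs - Aᵀ.mulVec (A.mulVec (xp - xs))) + Aᵀ.mulVec (y - A.mulVec xs) := by
    rw [hg, hr]
    simp only [Matrix.mulVec_sub]
    abel
  have gbound : ∀ T : Finset (Fin n), T.card ≤ k →
      nrm (restr g T) ≤ δ₃ * nrm (xp - xs) + √(1 + δ₁) * nrm (y - A.mulVec xs) := by
    intro T hT
    have hsplit : restr g T = restr (xp - xs - Aᵀ.mulVec (A.mulVec (xp - xs))) T +
        restr (Aᵀ.mulVec (y - A.mulVec xs)) T := by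
      rw [hgeq]
      ext i
      by_cases hi : i ∈ T <;> simp [restr, hi]
    rw [hsplit]
    exact (nrm_add_le _ _).trans (add_le_add
      (nrm_restr_sub_gram_le h3 _ T W ((Finset.card_union_le _ _).trans (by omega)) hz)
      (nrm_restr_transpose_le h1 _ T hT))
  -- Outside `W ∪ Ω` the vector `u - x*` vanishes.
  set B' := B ∩ (W ∪ Ω) with hB'
  have hB'c : B'.card ≤ k := (Finset.card_le_card Finset.inter_subset_left).trans hB
  have hsplit : restr (xp + h - xs) B = restr g B' - restr r (B' \ Ω) := by
    ext i
    by_cases hi : i ∈ B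
    · by_cases hiΩ : i ∈ Ω
      · simp [restr, hB', hi, hiΩ, hh1 i hiΩ, hg]
        ring
      · by_cases hiW : i ∈ W
        · simp [restr, hB', hi, hiΩ, hiW, hh2 i hiΩ, hg]
        · have := hz i hiW
          simp only [Pi.sub_apply] at this
          simp [restr, hB', hi, hiΩ, hiW, hh2 i hiΩ, this]
    · simp [restr, hB', hi]
  -- The missed entries lie in `W \ Ω`; since `|Ω| ≥ |W|` they can be traded for entries in `Ω \ W`.
  have hsub : B' \ Ω ⊆ W \ Ω := by
    intro i hi
    simp only [hB', Finset.mem_sdiff, Finset.mem_inter, Finset.mem_union] at hi ⊢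
    tauto
  have hc : (B' \ Ω).card ≤ (Ω \ W).card := by
    have e0 := Finset.card_le_card hsub
    have e1 := Finset.card_sdiff_add_card_inter W Ω
    have e2 := Finset.card_sdiff_add_card_inter Ω W
    rw [Finset.inter_comm] at e2
    omega
  obtain ⟨T, hTsub, hTc⟩ := Finset.exists_subset_card_eq hc
  have hTk : T.card ≤ k := by
    rw [hTc]
    exact (Finset.card_le_card Finset.sdiff_subset).trans hB'c
  have hdom : nrm (restr r (B' \ Ω)) ≤ nrm (restr r T) :=
    nrm_restr_le_of_dominated r _ _ hTc.ge fun i hi j hj =>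
      hh3 i (Finset.mem_sdiff.mp (hTsub hi)).1 j (Finset.mem_sdiff.mp hj).2
  have hTeq : restr r T = restr g T := by
    ext i
    by_cases hi : i ∈ T
    · have := hz i (Finset.mem_sdiff.mp (hTsub hi)).2
      simp [restr, hi, hg, Pi.add_apply, this]
    · simp [restr, hi]
  rw [hsplit]
  have e1 := nrm_sub_le (restr g B') (restr r (B' \ Ω))
  have e2 := gbound B' hB'c
  have e3 := gbound T hTk
  rw [hTeq] at hdom
  linarith

/-- One step of the algorithm; `P` contains the support of `x^p`. -/
lemma one_step {m n k q t : ℕ} (hq : 2 * k ≤ q) (hqt : q ≤ t * k)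
    {A : Matrix (Fin m) (Fin n) ℝ} {y : Fin m → ℝ} {xs xp h w x' : Fin n → ℝ}
    {S P Ω X : Finset (Fin n)} {δ₁ δ₂ δ₃ : ℝ}
    (h1 : RIC A k δ₁) (h2 : RIC A (2 * k) δ₂) (h3 : RIC A (3 * k) δ₃)
    (hS : S.card ≤ k) (hxs : ∀ i ∉ S, xs i = 0) (hP : P.card ≤ k) (hxp : ∀ i ∉ P, xp i = 0)
    (hh : IsHT q (Aᵀ.mulVec (y - A.mulVec xp)) h Ω) (hw : ∀ i, 0 ≤ w i ∧ w i ≤ 1)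
    (hopt : ∀ w' : Fin n → ℝ, (∑ i, w' i) = (k : ℝ) → (∀ i, 0 ≤ w' i ∧ w' i ≤ 1) →
      nrm (y - A.mulVec (fun i => w i * (xp i + h i))) ^ 2 ≤
        nrm (y - A.mulVec (fun i => w' i * (xp i + h i))) ^ 2)
    (hx' : IsHT k (fun i => w i * (xp i + h i)) x' X) :
    √(1 - δ₂) * nrm (x' - xs) ≤
      2 * (√(1 + δ₁) * ((t + 2) *
        (2 * (δ₃ * nrm (xp - xs) + √(1 + δ₁) * nrm (y - A.mulVec xs)))) +
        2 * nrm (y - A.mulVec xs)) := by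
  have hu := fun B hB => nrm_restr_u_sub_le hq h1 h3 hS hxs hP hxp hh B hB
  set η := y - A.mulVec xs with hη
  set c := 2 * (δ₃ * nrm (xp - xs) + √(1 + δ₁) * nrm η) with hc
  set v : Fin n → ℝ := fun i => w i * (xp i + h i) with hv
  have hXc : X.card = k := hx'.1
  set V := X ∪ S with hV
  have hVc : V.card ≤ 2 * k := (Finset.card_union_le _ _).trans (by omega)
  -- A feasible competitor: the indicator of a set `S' ⊇ S` of size `k`.
  obtain ⟨S', hSS', -, hS'⟩ := Finset.exists_subsuperset_card_eq (Finset.subset_union_right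
    (s₁ := X) (s₂ := S)) hS (hXc.ge.trans (Finset.card_le_card Finset.subset_union_left))
  have hupper : nrm (y - A.mulVec v) ≤ nrm η + √(1 + δ₁) * c := by
    have hle := hopt (fun i => if i ∈ S' then 1 else 0) (by simp [hS'])
      (fun i => by split_ifs <;> norm_num)
    have hle := le_of_sq_le_sq hle (nrm_nonneg _)
    refine hle.trans ?_
    have hdec : y - A.mulVec (fun i => (if i ∈ S' then 1 else 0) * (xp i + h i)) =
        η - A.mulVec (restr (xp + h - xs) S') := by
      rw [hη, sub_sub, ← Matrix.mulVec_add]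
      congr 2
      ext i
      by_cases hi : i ∈ S'
      · simp [restr, hi]
      · simp [restr, hi, hxs i fun h' => hi (hSS' h')]
    rw [hdec]
    refine (nrm_sub_le _ _).trans (add_le_add le_rfl ?_)
    refine (nrm_mulVec_le h1 (sparse_of_support S' hS'.le fun i hi => by simp [restr, hi])).trans ?_
    exact mul_le_mul_of_nonneg_left (hu S' hS'.le) (Real.sqrt_nonneg _)
  -- The part of `v` outside `V` splits into `t + 1` blocks, as `|supp u| ≤ k + q ≤ (t + 1) k`.
  have htail : nrm (A.mulVec (restr v ((P ∪ Ω) \ V))) ≤ ((t + 1 : ℕ) : ℝ) * (√(1 + δ₁) * c) := by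
    refine nrm_mulVec_restr_le_blocks (k := k) A v _ (t + 1) _ ?_ fun T hT hTk => ?_
    · refine (Finset.card_le_card Finset.sdiff_subset).trans
        ((Finset.card_union_le _ _).trans ?_)
      rw [hh.1, Nat.succ_mul]
      omega
    · refine (nrm_mulVec_le h1
        (sparse_of_support T hTk fun i hi => by simp [restr, hi])).trans
        (mul_le_mul_of_nonneg_left (le_trans ?_ (hu T hTk)) (Real.sqrt_nonneg _))
      refine nrm_le_of_abs_le _ _ fun i => ?_
      by_cases hi : i ∈ T
      · have hiS : i ∉ S := fun h' =>
          (Finset.mem_sdiff.mp (hT hi)).2 (Finset.mem_union_right _ h')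
        simp only [restr, hi, if_true, hv, abs_mul, Pi.sub_apply, Pi.add_apply, hxs i hiS, sub_zero]
        rw [abs_of_nonneg (hw i).1]
        exact mul_le_of_le_one_left (abs_nonneg _) (hw i).2
      · simp [restr, hi]
  have hlower : √(1 - δ₂) * nrm (restr (v - xs) V) ≤
      nrm η + nrm (y - A.mulVec v) + nrm (A.mulVec (restr v ((P ∪ Ω) \ V))) := by
    refine (le_nrm_mulVec h2
      (sparse_of_support V hVc fun i hi => by simp [restr, hi])).trans ?_
    have hdec : restr (v - xs) V = v - xs - restr v ((P ∪ Ω) \ V) := by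
      ext i
      by_cases hi : i ∈ V
      · simp [restr, hi]
      · have hiS : i ∉ S := fun h' => hi (Finset.mem_union_right _ h')
        by_cases hP' : i ∈ P
        · simp [restr, hi, hP', hxs i hiS]
        · by_cases hO : i ∈ Ω
          · simp [restr, hi, hO, hxs i hiS]
          · simp [restr, hi, hP', hO, hxs i hiS, hv, hxp i hP', hh.2.2.1 i hO]
    have hdec' : A.mulVec (restr (v - xs) V) =
        η - (y - A.mulVec v) - A.mulVec (restr v ((P ∪ Ω) \ V)) := by
      rw [hdec, Matrix.mulVec_sub, Matrix.mulVec_sub, hη]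
      abel
    rw [hdec']
    exact (nrm_sub_le _ _).trans (add_le_add (nrm_sub_le _ _) le_rfl)
  have hht := mul_le_mul_of_nonneg_left (nrm_hardThreshold_sub_le hx' hS hxs)
    (Real.sqrt_nonneg (1 - δ₂))
  push_cast at htail
  rw [← hV] at hht
  linarith

/-! ### Constants -/

lemma golden_sq : ((√5 + 1) / 2) ^ 2 = (3 + √5) / 2 := by
  have := Real.sq_sqrt (show (0 : ℝ) ≤ 5 by norm_num)
  nlinarith

lemma rate_lt_one {T β δ₁ δ₂ δ₃ : ℝ} (hT : 0 ≤ T) (hβ : β < 1) (hδ₁ : 0 ≤ δ₁) (hδ₃ : 0 ≤ δ₃)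
    (h12 : δ₁ ≤ δ₂) (h23 : δ₂ ≤ δ₃) (hδ : δ₃ < β)
    (hroot : 9 * T ^ 2 * β ^ 3 + 9 * T ^ 2 * β ^ 2 +
      2 / (7 + 3 * √5) * β - 2 / (7 + 3 * √5) = 0) :
    3 * ((√5 + 1) / 2) ^ 2 * T * δ₃ * √((1 + δ₁) / (1 - δ₂)) < 1 := by
  have h5 := Real.sq_sqrt (show (0 : ℝ) ≤ 5 by norm_num)
  have h5' := Real.sqrt_nonneg 5
  have hK : (0 : ℝ) < 7 + 3 * √5 := by positivity
  have h2 : 0 < 1 - δ₂ := by linarith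
  have hsq : δ₃ ^ 2 ≤ β ^ 2 := by gcongr
  have hcu : δ₃ ^ 3 ≤ β ^ 3 := by gcongr
  -- The cubic is increasing, hence negative at `δ₃`.
  have hneg : 9 * T ^ 2 * (δ₃ ^ 2 * (1 + δ₃)) < 2 / (7 + 3 * √5) * (1 - δ₃) := by
    have e1 := mul_le_mul_of_nonneg_left (add_le_add hsq hcu) (show 0 ≤ 9 * T ^ 2 by positivity)
    have e2 := mul_lt_mul_of_pos_left hδ (show 0 < 2 / (7 + 3 * √5) by positivity)
    linarith
  have hneg' : 9 * T ^ 2 * (δ₃ ^ 2 * (1 + δ₁)) < 2 / (7 + 3 * √5) * (1 - δ₂) := by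
    have e1 : 9 * T ^ 2 * (δ₃ ^ 2 * (1 + δ₁)) ≤ 9 * T ^ 2 * (δ₃ ^ 2 * (1 + δ₃)) := by
      gcongr; linarith
    have e2 : 2 / (7 + 3 * √5) * (1 - δ₃) ≤ 2 / (7 + 3 * √5) * (1 - δ₂) := by gcongr
    linarith
  rw [← sq_lt_one_iff₀ (by positivity)]
  have hgold : (((√5 + 1) / 2) ^ 2) ^ 2 = (7 + 3 * √5) / 2 := by
    rw [golden_sq]; nlinarith
  have hexp : (3 * ((√5 + 1) / 2) ^ 2 * T * δ₃ * √((1 + δ₁) / (1 - δ₂))) ^ 2 =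
      (7 + 3 * √5) / 2 * (9 * T ^ 2 * (δ₃ ^ 2 * (1 + δ₁))) / (1 - δ₂) := by
    rw [mul_pow, Real.sq_sqrt (by positivity), mul_pow, mul_pow, mul_pow, hgold]
    ring
  rw [hexp, div_lt_one h2]
  have := mul_lt_mul_of_pos_left hneg' (show 0 < (7 + 3 * √5) / 2 by positivity)
  have e : (7 + 3 * √5) / 2 * (2 / (7 + 3 * √5) * (1 - δ₂)) = 1 - δ₂ := by
    field_simp
  linarith

theorem stmt7 {m n : ℕ} (k q : ℕ) (hk : 0 < k) (hq : 2 * k ≤ q)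
    (A : Matrix (Fin m) (Fin n) ℝ) (y : Fin m → ℝ)
    (xs : Fin n → ℝ) (hxs : sparse k xs) (η : Fin m → ℝ) (hη : η = y - A.mulVec xs)
    (t : ℕ) (ht : t = ⌈(q : ℝ) / (k : ℝ)⌉₊)
    (δ₁ δ₂ δ₃ : ℝ) (h1 : RIC A k δ₁) (h2 : RIC A (2 * k) δ₂) (h3 : RIC A (3 * k) δ₃)
    (h12 : δ₁ ≤ δ₂) (h23 : δ₂ ≤ δ₃)
    (β : ℝ) (hβ : β ∈ Set.Ioo (0 : ℝ) 1)
    (hroot : 9 * ((t : ℝ) + 1) ^ 2 * β ^ 3 + 9 * ((t : ℝ) + 1) ^ 2 * β ^ 2 +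
      2 / (7 + 3 * Real.sqrt 5) * β - 2 / (7 + 3 * Real.sqrt 5) = 0)
    (huniq : ∀ γ ∈ Set.Ioo (0 : ℝ) 1,
      9 * ((t : ℝ) + 1) ^ 2 * γ ^ 3 + 9 * ((t : ℝ) + 1) ^ 2 * γ ^ 2 +
        2 / (7 + 3 * Real.sqrt 5) * γ - 2 / (7 + 3 * Real.sqrt 5) = 0 → γ = β)
    (hδ : δ₃ < β)
    (x : ℕ → Fin n → ℝ) (hx : IsPGROTSeq A y k q x)
    (ρ τ : ℝ)
    (hρ : ρ = 3 * ((Real.sqrt 5 + 1) / 2) ^ 2 * ((t : ℝ) + 1) * δ₃ *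
      Real.sqrt ((1 + δ₁) / (1 - δ₂)))
    (hτ : τ = ((Real.sqrt 5 + 1) / 2) ^ 2 * (3 * ((t : ℝ) + 1) * (1 + δ₁)) /
      Real.sqrt (1 - δ₂) + (Real.sqrt 5 + 1) / Real.sqrt (1 - δ₂)) :
    ρ < 1 ∧ ∀ p : ℕ,
      nrm (x (p + 1) - xs) ≤ ρ ^ p * nrm (x 0 - xs) + τ / (1 - ρ) * nrm η := by
  have h52 : (2 : ℝ) ≤ √5 := Real.le_sqrt_of_sq_le (by norm_num)
  have hδ₂ : 0 < 1 - δ₂ := by linarith [h2.2.1]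
  have hkR : (0 : ℝ) < k := by exact_mod_cast hk
  have hqt : q ≤ t * k := by
    have := Nat.le_ceil ((q : ℝ) / k)
    rw [← ht, div_le_iff₀ hkR] at this
    exact_mod_cast this
  have ht2 : (2 : ℝ) ≤ t := by
    have : 2 ≤ t := le_of_mul_le_mul_right (hq.trans hqt) hk
    exact_mod_cast this
  have hρ1 : ρ < 1 := by
    rw [hρ]
    exact rate_lt_one (by positivity) hβ.2 h1.1 h3.1 h12 h23 hδ hroot
  have hρ0 : 0 ≤ ρ := by
    rw [hρ]
    have := h3.1
    positivity
  have hτ0 : 0 ≤ τ := by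
    rw [hτ]
    have := h1.1
    positivity
  have hstep : ∀ p, nrm (x (p + 1) - xs) ≤ ρ * nrm (x p - xs) + τ * nrm η := by
    intro p
    obtain ⟨P, hP, hxp⟩ : ∃ P : Finset (Fin n), P.card ≤ k ∧ ∀ i ∉ P, x p i = 0 := by
      cases p with
      | zero => exact ⟨∅, by simp, fun i _ => by simp [hx.1]⟩
      | succ p =>
        obtain ⟨_, _, _, Ω', -, -, -, -, hΩ'⟩ := hx.2 p
        exact ⟨Ω', hΩ'.1.le, hΩ'.2.2.1⟩
    obtain ⟨h, Ω, w, Ω', hh, -, hw, hopt, hx'⟩ := hx.2 p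
    have key := one_step (S := suppF xs) hq hqt h1 h2 h3 hxs (fun i hi => by simpa [suppF] using hi)
      hP hxp hh hw hopt hx'
    rw [← hη] at key
    have hs : 0 < √(1 - δ₂) := Real.sqrt_pos.mpr hδ₂
    refine le_of_mul_le_mul_left (key.trans ?_) hs
    have hσ : √(1 + δ₁) ^ 2 = 1 + δ₁ := Real.sq_sqrt (by linarith [h1.1])
    have hrhs : √(1 - δ₂) * (ρ * nrm (x p - xs) + τ * nrm η) =
        3 * ((3 + √5) / 2) * (t + 1) * (√(1 + δ₁) * (δ₃ * nrm (x p - xs))) +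
        (3 * ((3 + √5) / 2) * (t + 1) * ((1 + δ₁) * nrm η) + (√5 + 1) * nrm η) := by
      rw [hρ, hτ, golden_sq, Real.sqrt_div (by linarith [h1.1])]
      field_simp
    rw [hrhs]
    have ha : 0 ≤ √(1 + δ₁) * (δ₃ * nrm (x p - xs)) :=
      mul_nonneg (Real.sqrt_nonneg _) (mul_nonneg h3.1 (nrm_nonneg _))
    have hη0 := nrm_nonneg η
    have hb : nrm η ≤ (1 + δ₁) * nrm η := le_mul_of_one_le_left hη0 (by linarith [h1.1])
    have hC : 4 * ((t : ℝ) + 2) + 1 ≤ 3 * ((3 + √5) / 2) * (t + 1) := by nlinarith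
    have e1 := mul_le_mul_of_nonneg_right hC ha
    have e2 := mul_le_mul_of_nonneg_right hC (hη0.trans hb)
    have e3 := mul_le_mul_of_nonneg_right h52 hη0
    have e4 : 2 * (√(1 + δ₁) * ((t + 2) * (2 * (δ₃ * nrm (x p - xs) + √(1 + δ₁) * nrm η))) +
        2 * nrm η) = 4 * ((t : ℝ) + 2) * (√(1 + δ₁) * (δ₃ * nrm (x p - xs))) +
        4 * ((t : ℝ) + 2) * ((1 + δ₁) * nrm η) + 4 * nrm η := by
      linear_combination 4 * ((t : ℝ) + 2) * nrm η * hσ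
    rw [e4]
    linarith
  refine ⟨hρ1, fun p => ?_⟩
  have hgeo : ∀ p, nrm (x p - xs) ≤ ρ ^ p * nrm (x 0 - xs) + τ / (1 - ρ) * nrm η := by
    intro p
    induction p with
    | zero =>
      have : 0 ≤ τ / (1 - ρ) * nrm η :=
        mul_nonneg (div_nonneg hτ0 (by linarith)) (nrm_nonneg _)
      simpa using this
    | succ p ih =>
      have e1 := mul_le_mul_of_nonneg_left ih hρ0
      -- `τ / (1 - ρ)` is the fixed point of `c ↦ ρ c + τ`.
      have e2 : ρ * (τ / (1 - ρ)) + τ = τ / (1 - ρ) := by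
        have : 1 - ρ ≠ 0 := by linarith
        field_simp
        ring
      calc nrm (x (p + 1) - xs) ≤ ρ * nrm (x p - xs) + τ * nrm η := hstep p
        _ ≤ ρ * (ρ ^ p * nrm (x 0 - xs) + τ / (1 - ρ) * nrm η) + τ * nrm η := by linarith
        _ = ρ ^ (p + 1) * nrm (x 0 - xs) + (ρ * (τ / (1 - ρ)) + τ) * nrm η := by ring
        _ = _ := by rw [e2]
  refine (hgeo (p + 1)).trans (add_le_add ?_ le_rfl)
  exact mul_le_mul_of_nonneg_right (pow_le_pow_of_le_one hρ0 hρ1.le p.le_succ) (nrm_nonneg _)
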